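/- Let α ∈ (0,2] and let g : ℝ → [0,∞) be a probability density such that ∫_ℝ e^{isu} g(s) ds = e^{−|u|^α} for all u ∈ ℝ (the density of a suitably scaled symmetric α-stable law). Let (X',Y') be an independent copy of (X,Y), and let Y'', Y''' be independent copies of Y such that (X,Y), (X',Y'), Y'', Y''' are mutually independent. Then d_g(X,Y) = e^{−1} ( E[exp(∫_0^1 e^{−|X(x)−X'(x)|^α − |Y(x)−Y'(x)|^α} dx)] + E[exp(∫_0^1 e^{−|X(x)−X'(x)|^α − |Y''(x)−Y'''(x)|^α} dx)] − 2 E[exp(∫_0^1 e^{−|X(x)−X'(x)|^α − |Y(x)−Y''(x)|^α} dx)] ). -/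

import Mathlib

open MeasureTheory
open scoped unitInterval ENNReal

/-- The joint characteristic function of the finite-dimensional distribution of the pair
of processes `(X, Y)` at the points `x 0, …, x (k-1)` of `[0,1]`:
`φ_{X,Y}(x; s, t) = E[exp(i Σ_j (s_j X(x_j) + t_j Y(x_j)))]`. -/
noncomputable def jointCF {Ω : Type*} [MeasurableSpace Ω] (ℙ : Measure Ω)
    (X Y : Ω → C(I, ℝ)) {k : ℕ} (x : Fin k → I) (s t : Fin k → ℝ) : ℂ :=
  ∫ ω, Complex.exp (Complex.I * ((∑ j, (s j * X ω (x j) + t j * Y ω (x j)) : ℝ) : ℂ)) ∂ℙ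

/-- The characteristic function of the finite-dimensional distribution of the process `X`
at the points `x 0, …, x (k-1)` of `[0,1]`: `φ_X(x; s) = E[exp(i Σ_j s_j X(x_j))]`. -/
noncomputable def margCF {Ω : Type*} [MeasurableSpace Ω] (ℙ : Measure Ω)
    (X : Ω → C(I, ℝ)) {k : ℕ} (x : Fin k → I) (s : Fin k → ℝ) : ℂ :=
  ∫ ω, Complex.exp (Complex.I * ((∑ j, s j * X ω (x j) : ℝ) : ℂ)) ∂ℙ

/-- The distance covariance `d_g(X,Y)` of two stochastic processes `X, Y` with continuous
sample paths on `[0,1]`, with weight function `g`: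
`d_g(X,Y) = Σ_{k≥1} (e^{-1}/k!) ∫_{[0,1]^k} ∫_{ℝ^{2k}} |φ_{X,Y} - φ_X φ_Y|² Π_j g(s_j)g(t_j) ds dt dx`. -/
noncomputable def distCov {Ω : Type*} [MeasurableSpace Ω] (ℙ : Measure Ω)
    (X Y : Ω → C(I, ℝ)) (g : ℝ → ℝ) : ℝ≥0∞ :=
  ∑' k : ℕ,
    ENNReal.ofReal (Real.exp (-1) / (Nat.factorial (k + 1) : ℝ)) *
      ∫⁻ (x : Fin (k + 1) → I),
        ∫⁻ (s : Fin (k + 1) → ℝ), ∫⁻ (t : Fin (k + 1) → ℝ),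
          ENNReal.ofReal
            (‖jointCF ℙ X Y x s t - margCF ℙ X x s * margCF ℙ Y x t‖ ^ 2 *
              ∏ j, g (s j) * g (t j))



section Helpers

/-- Generic characteristic functional. -/
noncomputable def genCF {Θ : Type*} [MeasurableSpace Θ] (ρ : Measure Θ)
    (u v : Θ → I → ℝ) {k : ℕ} (x : Fin k → I) (s t : Fin k → ℝ) : ℂ :=
  ∫ θ, Complex.exp (Complex.I * ((∑ j, (s j * u θ (x j) + t j * v θ (x j)) : ℝ) : ℂ)) ∂ρ

/-- The inner integral appearing in the representation. -/
noncomputable def qInt {Θ : Type*} (α : ℝ) (u v : Θ → I → ℝ) (θ : Θ) : ℝ :=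
  ∫ x : I, Real.exp (-(|u θ x| ^ α) - |v θ x| ^ α)

/-- The weight measure on `ℝ^n`. -/
noncomputable def wMeas (g : ℝ → ℝ) (n : ℕ) : Measure (Fin n → ℝ) :=
  (volume : Measure (Fin n → ℝ)).withDensity (fun s => ENNReal.ofReal (∏ j, g (s j)))

lemma norm_cexp_aux (r : ℝ) : ‖Complex.exp (Complex.I * (r : ℂ))‖ = 1 := by
  rw [mul_comm, Complex.norm_exp_ofReal_mul_I]

lemma prod_g_meas {g : ℝ → ℝ} (hg : Measurable g) (n : ℕ) :
    Measurable (fun s : Fin n → ℝ => ∏ j, g (s j)) := by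
  apply Finset.measurable_fun_prod
  intro i _
  exact hg.comp (measurable_pi_apply i)

lemma g_integrable {g : ℝ → ℝ} (hg_int : (∫ s, g s) = 1) : Integrable g := by
  by_contra h
  rw [integral_undef h] at hg_int
  exact zero_ne_one hg_int

lemma wMeas_prob {g : ℝ → ℝ} (hg_nonneg : ∀ s, 0 ≤ g s)
    (hg_int : (∫ s, g s) = 1) (n : ℕ) : IsProbabilityMeasure (wMeas g n) := by
  constructor
  have hi := g_integrable hg_int
  rw [wMeas, withDensity_apply _ MeasurableSet.univ, Measure.restrict_univ,
    ← ofReal_integral_eq_lintegral_ofReal]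
  · rw [integral_fintype_prod_volume_eq_pow, hg_int]; simp
  · exact Integrable.fintype_prod (fun _ => hi)
  · exact Filter.Eventually.of_forall fun s => Finset.prod_nonneg fun j _ => hg_nonneg _

lemma wMeas_charFun {α : ℝ} {g : ℝ → ℝ} (hg : Measurable g) (hg_nonneg : ∀ s, 0 ≤ g s)
    (hg_stable : ∀ u : ℝ,
      (∫ s : ℝ, Complex.exp (Complex.I * ((s * u : ℝ) : ℂ)) * (g s : ℂ))
        = ((Real.exp (-(|u| ^ α)) : ℝ) : ℂ)) (n : ℕ) (u : Fin n → ℝ) :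
    ∫ s, Complex.exp (Complex.I * ((∑ j, s j * u j : ℝ) : ℂ)) ∂(wMeas g n)
      = ((∏ j, Real.exp (-(|u j| ^ α)) : ℝ) : ℂ) := by
  rw [wMeas, integral_withDensity_eq_integral_toReal_smul
    (prod_g_meas hg n).ennreal_ofReal (by simp)]
  have : ∀ s : Fin n → ℝ, (ENNReal.ofReal (∏ j, g (s j))).toReal •
      Complex.exp (Complex.I * ((∑ j, s j * u j : ℝ) : ℂ))
      = ∏ j, (Complex.exp (Complex.I * ((s j * u j : ℝ) : ℂ)) * (g (s j) : ℂ)) := by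
    intro s
    rw [ENNReal.toReal_ofReal (Finset.prod_nonneg fun j _ => hg_nonneg _),
      Finset.prod_mul_distrib, ← Complex.exp_sum, ← Finset.mul_sum, Complex.real_smul, mul_comm]
    push_cast
    rfl
  simp_rw [this]
  rw [integral_fintype_prod_volume_eq_prod
    (fun j (r : ℝ) => Complex.exp (Complex.I * ((r * u j : ℝ) : ℂ)) * (g r : ℂ))]
  simp_rw [hg_stable]
  push_cast
  rfl

variable {Θ : Type*} [MeasurableSpace Θ]

lemma meas_integrand {u v : Θ → I → ℝ} (hu : Measurable (Function.uncurry u))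
    (hv : Measurable (Function.uncurry v)) (n : ℕ) :
    Measurable (fun p : ((Fin n → I) × (Fin n → ℝ) × (Fin n → ℝ)) × Θ =>
      Complex.exp (Complex.I *
        ((∑ j, (p.1.2.1 j * u p.2 (p.1.1 j) + p.1.2.2 j * v p.2 (p.1.1 j)) : ℝ) : ℂ))) := by
  apply Complex.measurable_exp.comp
  apply Measurable.const_mul
  apply Complex.measurable_ofReal.comp
  apply Finset.measurable_fun_sum
  intro j _
  have h1 : Measurable (fun p : ((Fin n → I) × (Fin n → ℝ) × (Fin n → ℝ)) × Θ =>
      u p.2 (p.1.1 j)) :=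
    hu.comp (f := fun p : ((Fin n → I) × (Fin n → ℝ) × (Fin n → ℝ)) × Θ => (p.2, p.1.1 j))
      (by fun_prop)
  have h2 : Measurable (fun p : ((Fin n → I) × (Fin n → ℝ) × (Fin n → ℝ)) × Θ =>
      v p.2 (p.1.1 j)) :=
    hv.comp (f := fun p : ((Fin n → I) × (Fin n → ℝ) × (Fin n → ℝ)) × Θ => (p.2, p.1.1 j))
      (by fun_prop)
  fun_prop

lemma genCF_meas (ρ : Measure Θ) [IsProbabilityMeasure ρ] {u v : Θ → I → ℝ}
    (hu : Measurable (Function.uncurry u))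
    (hv : Measurable (Function.uncurry v)) (n : ℕ) :
    Measurable (fun p : (Fin n → I) × (Fin n → ℝ) × (Fin n → ℝ) =>
      genCF ρ u v p.1 p.2.1 p.2.2) :=
  ((meas_integrand hu hv n).stronglyMeasurable.integral_prod_right' (ν := ρ)).measurable

lemma genCF_norm (ρ : Measure Θ) [IsProbabilityMeasure ρ] (u v : Θ → I → ℝ) {n : ℕ}
    (x : Fin n → I) (s t : Fin n → ℝ) : ‖genCF ρ u v x s t‖ ≤ 1 := by
  refine (norm_integral_le_of_norm_le_const (C := 1) ?_).trans (by simp)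
  exact Filter.Eventually.of_forall fun θ => (norm_cexp_aux _).le

lemma genCF_integrable (ρ : Measure Θ) [IsProbabilityMeasure ρ] {u v : Θ → I → ℝ}
    (hu : Measurable (Function.uncurry u))
    (hv : Measurable (Function.uncurry v)) (n : ℕ)
    (M : Measure ((Fin n → I) × (Fin n → ℝ) × (Fin n → ℝ))) [IsProbabilityMeasure M] :
    Integrable (fun p => genCF ρ u v p.1 p.2.1 p.2.2) M :=
  Integrable.of_bound (genCF_meas ρ hu hv n).aestronglyMeasurable 1
    (Filter.Eventually.of_forall fun p => genCF_norm ρ u v _ _ _)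

set_option maxHeartbeats 1000000 in
lemma integral_genCF (ρ : Measure Θ) [IsProbabilityMeasure ρ] {u v : Θ → I → ℝ}
    (hu : Measurable (Function.uncurry u))
    (hv : Measurable (Function.uncurry v)) (n : ℕ) (α : ℝ)
    (ν : Measure (Fin n → ℝ)) [IsProbabilityMeasure ν]
    (hν : ∀ w : Fin n → ℝ, ∫ s, Complex.exp (Complex.I * ((∑ j, s j * w j : ℝ) : ℂ)) ∂ν
      = ((∏ j, Real.exp (-(|w j| ^ α)) : ℝ) : ℂ)) :
    ∫ p, genCF ρ u v p.1 p.2.1 p.2.2 ∂((volume : Measure (Fin n → I)).prod (ν.prod ν))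
      = ((∫ θ, (qInt α u v θ) ^ n ∂ρ : ℝ) : ℂ) := by
  have hint : Integrable (fun p : ((Fin n → I) × (Fin n → ℝ) × (Fin n → ℝ)) × Θ =>
      Complex.exp (Complex.I *
        ((∑ j, (p.1.2.1 j * u p.2 (p.1.1 j) + p.1.2.2 j * v p.2 (p.1.1 j)) : ℝ) : ℂ)))
      (((volume : Measure (Fin n → I)).prod (ν.prod ν)).prod ρ) :=
    Integrable.of_bound (meas_integrand hu hv n).aestronglyMeasurable 1
      (Filter.Eventually.of_forall fun p => (norm_cexp_aux _).le)
  have hswap := integral_integral_swap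
    (f := fun (p : (Fin n → I) × (Fin n → ℝ) × (Fin n → ℝ)) (θ : Θ) =>
      Complex.exp (Complex.I *
        ((∑ j, (p.2.1 j * u θ (p.1 j) + p.2.2 j * v θ (p.1 j)) : ℝ) : ℂ))) hint
  unfold genCF
  rw [hswap, ← integral_complex_ofReal]
  congr 1
  ext θ
  have hm : Measurable (fun p : (Fin n → I) × (Fin n → ℝ) × (Fin n → ℝ) =>
      Complex.exp (Complex.I *
        ((∑ j, (p.2.1 j * u θ (p.1 j) + p.2.2 j * v θ (p.1 j)) : ℝ) : ℂ))) :=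
    (meas_integrand hu hv n).comp (measurable_id.prodMk measurable_const)
  rw [integral_prod _ (Integrable.of_bound hm.aestronglyMeasurable 1
      (Filter.Eventually.of_forall fun p => (norm_cexp_aux _).le))]
  have key : ∀ x : Fin n → I, ∫ y : (Fin n → ℝ) × (Fin n → ℝ),
      Complex.exp (Complex.I *
        ((∑ j, (y.1 j * u θ (x j) + y.2 j * v θ (x j)) : ℝ) : ℂ)) ∂(ν.prod ν)
      = ((∏ j, Real.exp (-(|u θ (x j)| ^ α) - |v θ (x j)| ^ α) : ℝ) : ℂ) := by
    intro x
    have : ∀ y : (Fin n → ℝ) × (Fin n → ℝ), Complex.exp (Complex.I *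
        ((∑ j, (y.1 j * u θ (x j) + y.2 j * v θ (x j)) : ℝ) : ℂ)) =
        Complex.exp (Complex.I * ((∑ j, y.1 j * u θ (x j) : ℝ) : ℂ)) *
        Complex.exp (Complex.I * ((∑ j, y.2 j * v θ (x j) : ℝ) : ℂ)) := by
      intro y
      rw [← Complex.exp_add, Finset.sum_add_distrib]
      push_cast
      ring_nf
    simp_rw [this]
    rw [integral_prod_mul
      (fun s : Fin n → ℝ => Complex.exp (Complex.I * ((∑ j, s j * u θ (x j) : ℝ) : ℂ)))
      (fun s : Fin n → ℝ => Complex.exp (Complex.I * ((∑ j, s j * v θ (x j) : ℝ) : ℂ))),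
      hν, hν, ← Complex.ofReal_mul, ← Finset.prod_mul_distrib]
    simp_rw [← Real.exp_add, sub_eq_add_neg]
  simp_rw [key]
  rw [integral_complex_ofReal, integral_fintype_prod_volume_eq_pow
    (fun x : I => Real.exp (-(|u θ x| ^ α) - |v θ x| ^ α))]
  simp [qInt]

lemma qInt_nonneg (α : ℝ) (u v : Θ → I → ℝ) (θ : Θ) : 0 ≤ qInt α u v θ :=
  integral_nonneg fun _ => (Real.exp_pos _).le

lemma qInt_le (α : ℝ) (u v : Θ → I → ℝ) (θ : Θ) : qInt α u v θ ≤ 1 := by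
  have : ‖qInt α u v θ‖ ≤ 1 := by
    refine (norm_integral_le_of_norm_le_const (C := 1) ?_).trans (by simp)
    refine Filter.Eventually.of_forall fun x => ?_
    rw [Real.norm_eq_abs, Real.abs_exp, Real.exp_le_one_iff]
    have h1 := Real.rpow_nonneg (abs_nonneg (u θ x)) α
    have h2 := Real.rpow_nonneg (abs_nonneg (v θ x)) α
    linarith
  exact (le_abs_self _).trans this

lemma qInt_meas (α : ℝ) {u v : Θ → I → ℝ} (hu : Measurable (Function.uncurry u))
    (hv : Measurable (Function.uncurry v)) : Measurable (qInt α u v) := by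
  have : Measurable (fun p : Θ × I => Real.exp (-(|u p.1 p.2| ^ α) - |v p.1 p.2| ^ α)) := by
    have h1 : Measurable (fun p : Θ × I => u p.1 p.2) := hu
    have h2 : Measurable (fun p : Θ × I => v p.1 p.2) := hv
    fun_prop
  exact (this.stronglyMeasurable.integral_prod_right' (ν := (volume : Measure I))).measurable

lemma qInt_hasSum (ρ : Measure Θ) [IsProbabilityMeasure ρ] (α : ℝ) {u v : Θ → I → ℝ}
    (hu : Measurable (Function.uncurry u)) (hv : Measurable (Function.uncurry v)) :
    HasSum (fun k : ℕ => (∫ θ, (qInt α u v θ) ^ (k + 1) ∂ρ) / (Nat.factorial (k + 1) : ℝ))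
      ((∫ θ, Real.exp (qInt α u v θ) ∂ρ) - 1) := by
  have hs : Summable (fun n : ℕ => (1 : ℝ) / (Nat.factorial n : ℝ)) := by
    simpa using Real.summable_pow_div_factorial 1
  have h : HasSum (fun n : ℕ => ∫ θ, (qInt α u v θ) ^ n / (Nat.factorial n : ℝ) ∂ρ)
      (∫ θ, Real.exp (qInt α u v θ) ∂ρ) := by
    apply hasSum_integral_of_dominated_convergence
      (fun (n : ℕ) (_ : Θ) => (1 : ℝ) / (Nat.factorial n : ℝ))
    · intro n
      exact (((qInt_meas α hu hv).pow_const n).div_const _).aestronglyMeasurable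
    · intro n
      refine Filter.Eventually.of_forall fun θ => ?_
      have h0 := qInt_nonneg α u v θ
      rw [Real.norm_of_nonneg (by positivity)]
      gcongr
      exact pow_le_one₀ h0 (qInt_le α u v θ)
    · exact Filter.Eventually.of_forall fun _ => hs
    · exact integrable_const _
    · refine Filter.Eventually.of_forall fun θ => ?_
      rw [Real.exp_eq_exp_ℝ]
      exact NormedSpace.expSeries_div_hasSum_exp _
  simp_rw [integral_div] at h
  rw [← hasSum_nat_add_iff' 1] at h
  simpa using h

lemma lintegral_nested {g : ℝ → ℝ} (hg : Measurable g) (hg_nonneg : ∀ s, 0 ≤ g s)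
    (hg_int : (∫ s, g s) = 1) (n : ℕ)
    (G : (Fin n → I) → (Fin n → ℝ) → (Fin n → ℝ) → ℝ)
    (hG : Measurable (fun p : (Fin n → I) × (Fin n → ℝ) × (Fin n → ℝ) => G p.1 p.2.1 p.2.2))
    (hG0 : ∀ x s t, 0 ≤ G x s t) :
    ∫⁻ (x : Fin n → I), ∫⁻ (s : Fin n → ℝ), ∫⁻ (t : Fin n → ℝ),
          ENNReal.ofReal (G x s t * ∏ j, g (s j) * g (t j))
    = ∫⁻ p, ENNReal.ofReal (G p.1 p.2.1 p.2.2)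
        ∂((volume : Measure (Fin n → I)).prod ((wMeas g n).prod (wMeas g n))) := by
  haveI := wMeas_prob hg_nonneg hg_int n
  rw [lintegral_prod _ hG.ennreal_ofReal.aemeasurable]
  congr 1
  ext x
  have hGx : Measurable (fun p : (Fin n → ℝ) × (Fin n → ℝ) => G x p.1 p.2) :=
    hG.comp (measurable_const.prodMk measurable_id)
  rw [lintegral_prod _ hGx.ennreal_ofReal.aemeasurable]
  have hGin : Measurable (fun s : Fin n → ℝ =>
      ∫⁻ t, ENNReal.ofReal (G x s t) ∂(wMeas g n)) :=
    hGx.ennreal_ofReal.lintegral_prod_right'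
  have hw := (prod_g_meas hg n).ennreal_ofReal
  conv_rhs => rw [wMeas]
  rw [lintegral_withDensity_eq_lintegral_mul _ hw (by exact hGin)]
  congr 1
  ext s
  have hGs : Measurable (fun t : Fin n → ℝ => ENNReal.ofReal (G x s t)) :=
    (hGx.comp (measurable_const.prodMk measurable_id)).ennreal_ofReal
  simp only [Pi.mul_apply]
  rw [lintegral_withDensity_eq_lintegral_mul _ hw hGs,
    ← lintegral_const_mul _ (hw.mul hGs)]
  congr 1
  ext t
  simp only [Pi.mul_apply]
  have h1 : 0 ≤ ∏ j, g (s j) := Finset.prod_nonneg fun j _ => hg_nonneg _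
  have h2 : 0 ≤ ∏ j, g (t j) := Finset.prod_nonneg fun j _ => hg_nonneg _
  rw [← ENNReal.ofReal_mul h2, ← ENNReal.ofReal_mul h1, Finset.prod_mul_distrib]
  congr 1
  ring

lemma conj_cexp_aux (r : ℝ) : (starRingEnd ℂ) (Complex.exp (Complex.I * (r : ℂ)))
    = Complex.exp (Complex.I * ((-r : ℝ) : ℂ)) := by
  rw [← Complex.exp_conj]
  simp

variable {Ω : Type*} [MeasurableSpace Ω]

lemma genCF_one (ℙ : Measure Ω) [IsProbabilityMeasure ℙ] (X Y : Ω → C(I, ℝ)) {n : ℕ}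
    (x : Fin n → I) (s t : Fin n → ℝ) :
    genCF (ℙ.prod ℙ) (fun ω x => X ω.1 x - X ω.2 x) (fun ω x => Y ω.1 x - Y ω.2 x) x s t
      = jointCF ℙ X Y x s t * (starRingEnd ℂ) (jointCF ℙ X Y x s t) := by
  unfold genCF jointCF
  rw [← integral_conj, ← integral_prod_mul]
  congr 1
  ext ω
  rw [conj_cexp_aux, ← Complex.exp_add, ← mul_add, ← Complex.ofReal_add,
    ← Finset.sum_neg_distrib, ← Finset.sum_add_distrib]
  congr 3
  exact Finset.sum_congr rfl fun j _ => by ring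

lemma genCF_two (ℙ : Measure Ω) [IsProbabilityMeasure ℙ] (X Y : Ω → C(I, ℝ)) {n : ℕ}
    (x : Fin n → I) (s t : Fin n → ℝ) :
    genCF ((ℙ.prod ℙ).prod (ℙ.prod ℙ)) (fun ω x => X ω.1.1 x - X ω.1.2 x)
        (fun ω x => Y ω.2.1 x - Y ω.2.2 x) x s t
      = (margCF ℙ X x s * (starRingEnd ℂ) (margCF ℙ X x s)) *
        (margCF ℙ Y x t * (starRingEnd ℂ) (margCF ℙ Y x t)) := by
  unfold genCF margCF
  rw [← integral_conj, ← integral_conj, ← integral_prod_mul, ← integral_prod_mul,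
    ← integral_prod_mul]
  congr 1
  ext ω
  simp only [conj_cexp_aux]
  simp only [← Complex.exp_add, ← mul_add, ← Complex.ofReal_add,
    ← Finset.sum_neg_distrib, ← Finset.sum_add_distrib]
  congr 3
  exact Finset.sum_congr rfl fun j _ => by ring

lemma genCF_three (ℙ : Measure Ω) [IsProbabilityMeasure ℙ] (X Y : Ω → C(I, ℝ)) {n : ℕ}
    (x : Fin n → I) (s t : Fin n → ℝ) :
    genCF (ℙ.prod (ℙ.prod ℙ)) (fun ω x => X ω.1 x - X ω.2.1 x)
        (fun ω x => Y ω.1 x - Y ω.2.2 x) x s t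
      = jointCF ℙ X Y x s t * 
        ((starRingEnd ℂ) (margCF ℙ X x s) * (starRingEnd ℂ) (margCF ℙ Y x t)) := by
  unfold genCF margCF jointCF
  rw [← integral_conj, ← integral_conj, ← integral_prod_mul, ← integral_prod_mul]
  congr 1
  ext ω
  simp only [conj_cexp_aux]
  simp only [← Complex.exp_add, ← mul_add, ← Complex.ofReal_add,
    ← Finset.sum_neg_distrib, ← Finset.sum_add_distrib]
  congr 3
  exact Finset.sum_congr rfl fun j _ => by ring

lemma norm_sq_aux (A B C : ℂ) : ‖A - B * C‖ ^ 2 =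
    (A * (starRingEnd ℂ) A).re + ((B * (starRingEnd ℂ) B) * (C * (starRingEnd ℂ) C)).re
      - 2 * (A * ((starRingEnd ℂ) B * (starRingEnd ℂ) C)).re := by
  rw [Complex.sq_norm, Complex.normSq_apply]
  simp
  ring

end Helpers

/-- If `g` is the density of a suitably scaled symmetric `α`-stable law,
i.e. `∫ e^{isu} g(s) ds = e^{−|u|^α}`, then (with independent copies realized on product
spaces as indicated by the coordinates)
`d_g(X,Y) = e⁻¹ (E[exp(∫₀¹ e^{−|X−X'|^α−|Y−Y'|^α})] + E[exp(∫₀¹ e^{−|X−X'|^α−|Y''−Y'''|^α})]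
− 2 E[exp(∫₀¹ e^{−|X−X'|^α−|Y−Y''|^α})])`. -/
theorem distCov_stable_representation
    {Ω : Type*} [MeasurableSpace Ω] (ℙ : Measure Ω) [IsProbabilityMeasure ℙ]
    [MeasurableSpace C(I, ℝ)] [BorelSpace C(I, ℝ)]
    (X Y : Ω → C(I, ℝ)) (hX : Measurable X) (hY : Measurable Y)
    (α : ℝ) (hα : α ∈ Set.Ioc 0 2)
    (g : ℝ → ℝ) (hg : Measurable g) (hg_nonneg : ∀ s, 0 ≤ g s)
    (hg_int : (∫ s, g s) = 1)
    (hg_stable : ∀ u : ℝ,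
      (∫ s : ℝ, Complex.exp (Complex.I * ((s * u : ℝ) : ℂ)) * (g s : ℂ))
        = ((Real.exp (-(|u| ^ α)) : ℝ) : ℂ)) :
    (distCov ℙ X Y g).toReal =
      Real.exp (-1) *
        ((∫ ω : Ω × Ω,
            Real.exp (∫ x : I,
              Real.exp (-(|X ω.1 x - X ω.2 x| ^ α) - |Y ω.1 x - Y ω.2 x| ^ α))
            ∂(ℙ.prod ℙ))
        + (∫ ω : (Ω × Ω) × Ω × Ω,
            Real.exp (∫ x : I,
              Real.exp (-(|X ω.1.1 x - X ω.1.2 x| ^ α) - |Y ω.2.1 x - Y ω.2.2 x| ^ α))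
            ∂((ℙ.prod ℙ).prod (ℙ.prod ℙ)))
        - 2 * (∫ ω : Ω × Ω × Ω,
            Real.exp (∫ x : I,
              Real.exp (-(|X ω.1 x - X ω.2.1 x| ^ α) - |Y ω.1 x - Y ω.2.2 x| ^ α))
            ∂(ℙ.prod (ℙ.prod ℙ)))) := by
  have evX : ∀ {Z : Ω → C(I, ℝ)}, Measurable Z →
      Measurable (fun p : Ω × I => Z p.1 p.2) := by
    intro Z hZ
    have hc : Measurable (fun p : C(I, ℝ) × I => p.1 p.2) :=
      (continuous_eval : Continuous (fun p : C(I, ℝ) × I => p.1 p.2)).measurable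
    exact hc.comp (f := fun p : Ω × I => (Z p.1, p.2)) (by fun_prop)
  have mdiff : ∀ {Θ : Type _} [MeasurableSpace Θ] {Z : Ω → C(I, ℝ)} (a b : Θ → Ω),
      Measurable Z → Measurable a → Measurable b →
      Measurable (Function.uncurry (fun (θ : Θ) (x : I) => Z (a θ) x - Z (b θ) x)) := by
    intro Θ _ Z a b hZ ha hb
    have h1 := (evX hZ).comp (f := fun p : Θ × I => (a p.1, p.2)) (by fun_prop)
    have h2 := (evX hZ).comp (f := fun p : Θ × I => (b p.1, p.2)) (by fun_prop)
    exact h1.sub h2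
  set u1 : Ω × Ω → I → ℝ := fun ω x => X ω.1 x - X ω.2 x with hu1
  set v1 : Ω × Ω → I → ℝ := fun ω x => Y ω.1 x - Y ω.2 x with hv1
  set u2 : (Ω × Ω) × Ω × Ω → I → ℝ := fun ω x => X ω.1.1 x - X ω.1.2 x with hu2
  set v2 : (Ω × Ω) × Ω × Ω → I → ℝ := fun ω x => Y ω.2.1 x - Y ω.2.2 x with hv2
  set u3 : Ω × Ω × Ω → I → ℝ := fun ω x => X ω.1 x - X ω.2.1 x with hu3
  set v3 : Ω × Ω × Ω → I → ℝ := fun ω x => Y ω.1 x - Y ω.2.2 x with hv3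
  have mu1 : Measurable (Function.uncurry u1) := mdiff _ _ hX (by fun_prop) (by fun_prop)
  have mv1 : Measurable (Function.uncurry v1) := mdiff _ _ hY (by fun_prop) (by fun_prop)
  have mu2 : Measurable (Function.uncurry u2) := mdiff _ _ hX (by fun_prop) (by fun_prop)
  have mv2 : Measurable (Function.uncurry v2) := mdiff _ _ hY (by fun_prop) (by fun_prop)
  have mu3 : Measurable (Function.uncurry u3) := mdiff _ _ hX (by fun_prop) (by fun_prop)
  have mv3 : Measurable (Function.uncurry v3) := mdiff _ _ hY (by fun_prop) (by fun_prop)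
  have s1 := qInt_hasSum (ℙ.prod ℙ) α mu1 mv1
  have s2 := qInt_hasSum ((ℙ.prod ℙ).prod (ℙ.prod ℙ)) α mu2 mv2
  have s3 := qInt_hasSum (ℙ.prod (ℙ.prod ℙ)) α mu3 mv3
  set F : ℕ → ℝ := fun n => (∫ θ, (qInt α u1 v1 θ) ^ n ∂(ℙ.prod ℙ))
    + (∫ θ, (qInt α u2 v2 θ) ^ n ∂((ℙ.prod ℙ).prod (ℙ.prod ℙ)))
    - 2 * (∫ θ, (qInt α u3 v3 θ) ^ n ∂(ℙ.prod (ℙ.prod ℙ))) with hF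
  have term : ∀ n : ℕ, 0 ≤ F n ∧ (∫⁻ (x : Fin n → I),
        ∫⁻ (s : Fin n → ℝ), ∫⁻ (t : Fin n → ℝ),
          ENNReal.ofReal
            (‖jointCF ℙ X Y x s t - margCF ℙ X x s * margCF ℙ Y x t‖ ^ 2 *
              ∏ j, g (s j) * g (t j))) = ENNReal.ofReal (F n) := by
    intro n
    haveI := wMeas_prob hg_nonneg hg_int n
    set M := (volume : Measure (Fin n → I)).prod ((wMeas g n).prod (wMeas g n)) with hM
    have heq : ∀ x s t, ‖jointCF ℙ X Y x s t - margCF ℙ X x s * margCF ℙ Y (k := n) x t‖ ^ 2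
        = (genCF (ℙ.prod ℙ) u1 v1 x s t).re
          + (genCF ((ℙ.prod ℙ).prod (ℙ.prod ℙ)) u2 v2 x s t).re
          - 2 * (genCF (ℙ.prod (ℙ.prod ℙ)) u3 v3 x s t).re := by
      intro x s t
      rw [norm_sq_aux, genCF_one, genCF_two, genCF_three]
    have i1 := genCF_integrable (ℙ.prod ℙ) mu1 mv1 n M
    have i2 := genCF_integrable ((ℙ.prod ℙ).prod (ℙ.prod ℙ)) mu2 mv2 n M
    have i3 := genCF_integrable (ℙ.prod (ℙ.prod ℙ)) mu3 mv3 n M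
    have hch := wMeas_charFun hg hg_nonneg hg_stable n
    have e1 := integral_genCF (ℙ.prod ℙ) mu1 mv1 n α _ hch
    have e2 := integral_genCF ((ℙ.prod ℙ).prod (ℙ.prod ℙ)) mu2 mv2 n α _ hch
    have e3 := integral_genCF (ℙ.prod (ℙ.prod ℙ)) mu3 mv3 n α _ hch
    rw [← hM] at e1 e2 e3
    have r1 := integral_re i1
    have r2 := integral_re i2
    have r3 := integral_re i3
    rw [e1] at r1
    rw [e2] at r2
    rw [e3] at r3
    simp only [RCLike.re_to_complex, Complex.ofReal_re] at r1 r2 r3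
    have j1 := i1.re
    have j2 := i2.re
    have j3 := i3.re
    simp only [RCLike.re_to_complex] at j1 j2 j3
    have hFn : F n = ∫ p, ‖jointCF ℙ X Y p.1 p.2.1 p.2.2
        - margCF ℙ X p.1 p.2.1 * margCF ℙ Y p.1 p.2.2‖ ^ 2 ∂M := by
      simp_rw [heq]
      have j12 : Integrable (fun p : (Fin n → I) × (Fin n → ℝ) × (Fin n → ℝ) =>
          (genCF (ℙ.prod ℙ) u1 v1 p.1 p.2.1 p.2.2).re +
          (genCF ((ℙ.prod ℙ).prod (ℙ.prod ℙ)) u2 v2 p.1 p.2.1 p.2.2).re) M := j1.add j2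
      rw [integral_sub j12 (j3.const_mul 2), integral_add j1 j2, integral_const_mul,
        r1, r2, r3]
    have hI : Integrable (fun p : (Fin n → I) × (Fin n → ℝ) × (Fin n → ℝ) =>
        ‖jointCF ℙ X Y p.1 p.2.1 p.2.2
        - margCF ℙ X p.1 p.2.1 * margCF ℙ Y p.1 p.2.2‖ ^ 2) M := by
      simp_rw [heq]
      exact (j1.add j2).sub (j3.const_mul 2)
    refine ⟨?_, ?_⟩
    · rw [hFn]; exact integral_nonneg fun _ => by positivity
    · rw [hFn, lintegral_nested hg hg_nonneg hg_int n
        (fun x s t => ‖jointCF ℙ X Y x s t - margCF ℙ X x s * margCF ℙ Y x t‖ ^ 2) ?_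
        (fun _ _ _ => by positivity),
        ofReal_integral_eq_lintegral_ofReal hI
          (Filter.Eventually.of_forall fun _ => by positivity)]
      simp_rw [heq]
      have m1 := Complex.measurable_re.comp (genCF_meas (ℙ.prod ℙ) mu1 mv1 n)
      have m2 := Complex.measurable_re.comp
        (genCF_meas ((ℙ.prod ℙ).prod (ℙ.prod ℙ)) mu2 mv2 n)
      have m3 := Complex.measurable_re.comp (genCF_meas (ℙ.prod (ℙ.prod ℙ)) mu3 mv3 n)
      exact (m1.add m2).sub (m3.const_mul 2)
  have hsum := (((s1.add s2).sub (s3.mul_left 2)).mul_left (Real.exp (-1)))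
  have hsum' : HasSum (fun k : ℕ => Real.exp (-1) / (Nat.factorial (k + 1) : ℝ) * F (k + 1))
      (Real.exp (-1) * ((∫ θ, Real.exp (qInt α u1 v1 θ) ∂(ℙ.prod ℙ))
        + (∫ θ, Real.exp (qInt α u2 v2 θ) ∂((ℙ.prod ℙ).prod (ℙ.prod ℙ)))
        - 2 * (∫ θ, Real.exp (qInt α u3 v3 θ) ∂(ℙ.prod (ℙ.prod ℙ))))) := by
    have hval : ∀ a b c e : ℝ, e * (a - 1 + (b - 1) - 2 * (c - 1)) = e * (a + b - 2 * c) := by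
      intros; ring
    rw [hval] at hsum
    have hfun : (fun k : ℕ => Real.exp (-1) / (Nat.factorial (k + 1) : ℝ) * F (k + 1)) = _ :=
      funext fun k => (show _ = Real.exp (-1) *
        ((∫ θ, (qInt α u1 v1 θ) ^ (k + 1) ∂(ℙ.prod ℙ)) / (Nat.factorial (k + 1) : ℝ)
        + (∫ θ, (qInt α u2 v2 θ) ^ (k + 1) ∂((ℙ.prod ℙ).prod (ℙ.prod ℙ)))
          / (Nat.factorial (k + 1) : ℝ)
        - 2 * ((∫ θ, (qInt α u3 v3 θ) ^ (k + 1) ∂(ℙ.prod (ℙ.prod ℙ)))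
          / (Nat.factorial (k + 1) : ℝ))) by
        simp only [hF]
        ring)
    rw [hfun]
    exact hsum
  have hnn : ∀ k : ℕ, 0 ≤ Real.exp (-1) / (Nat.factorial (k + 1) : ℝ) * F (k + 1) :=
    fun k => mul_nonneg (by positivity) (term _).1
  have hd : distCov ℙ X Y g = ENNReal.ofReal
      (∑' k : ℕ, Real.exp (-1) / (Nat.factorial (k + 1) : ℝ) * F (k + 1)) := by
    rw [ENNReal.ofReal_tsum_of_nonneg hnn hsum'.summable]
    unfold distCov
    congr 1
    ext k
    rw [(term (k + 1)).2, ENNReal.ofReal_mul (by positivity)]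
  rw [hd, ENNReal.toReal_ofReal (tsum_nonneg hnn), hsum'.tsum_eq]
  rfl
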